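/- Let Δ be a simplicial complex over a field k and suppose J ⊆ V(Δ) is an independent set for Δ. Then depth k[ast_Δ(J)] ≥ depth k[Δ] − 1. -/

import Mathlib

open Finset

/-- An abstract simplicial complex on vertex type `V`, given by a finite, downward closed
family of finite subsets of `V` (its faces). -/
structure SComplex (V : Type) [DecidableEq V] where
  faces : Finset (Finset V)
  down_closed : ∀ ⦃s t : Finset V⦄, s ∈ faces → t ⊆ s → t ∈ faces

namespace SComplex

variable {V : Type} [DecidableEq V]

/-- `K.rank = d = dim k[Δ] = dim Δ + 1` is the maximal cardinality of a face of `K`. -/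
def rank (K : SComplex V) : ℕ := K.faces.sup Finset.card

/-- `F` is a facet (maximal face) of `K`. -/
def IsFacet (K : SComplex V) (F : Finset V) : Prop :=
  F ∈ K.faces ∧ ∀ G ∈ K.faces, F ⊆ G → F = G

/-- `K` is pure: all facets have the maximal cardinality `K.rank`. -/
def Pure (K : SComplex V) : Prop := ∀ F : Finset V, K.IsFacet F → F.card = K.rank

/-- The link `lk_K(T) = {G ∈ K | T ∪ G ∈ K, T ∩ G = ∅}`. -/
def link (K : SComplex V) (T : Finset V) : SComplex V where
  faces := K.faces.filter fun G => Disjoint T G ∧ T ∪ G ∈ K.faces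
  down_closed := by
    intro s t hs hts
    simp only [Finset.mem_filter] at hs ⊢
    exact ⟨K.down_closed hs.1 hts, hs.2.1.mono_right hts,
      K.down_closed hs.2.2 (Finset.union_subset_union_right hts)⟩

/-- The anti-star `ast_K(T) = {G ∈ K | T ∩ G = ∅}`. -/
def antistar (K : SComplex V) (T : Finset V) : SComplex V where
  faces := K.faces.filter fun G => Disjoint T G
  down_closed := by
    intro s t hs hts
    simp only [Finset.mem_filter] at hs ⊢
    exact ⟨K.down_closed hs.1 hts, hs.2.mono_right hts⟩

/-- The induced subcomplex of `K` on a set `W` of vertices. -/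
def restrict (K : SComplex V) (W : Finset V) : SComplex V where
  faces := K.faces.filter fun G => G ⊆ W
  down_closed := by
    intro s t hs hts
    simp only [Finset.mem_filter] at hs ⊢
    exact ⟨K.down_closed hs.1 hts, hts.trans hs.2⟩

/-- The subcomplex of faces of cardinality at most `m`; as cardinality = dimension + 1, this is
the `(m-1)`-skeleton `Δ^{(m-1)}`. -/
def skelCard (K : SComplex V) (m : ℕ) : SComplex V where
  faces := K.faces.filter fun G => G.card ≤ m
  down_closed := by
    intro s t hs hts
    simp only [Finset.mem_filter] at hs ⊢
    exact ⟨K.down_closed hs.1 hts, le_trans (Finset.card_le_card hts) hs.2⟩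

/-- `K.trunc j` is `[Δ]_{>j}`, the order complex of the poset of faces of `K` of cardinality
(equivalently, of height in the face poset) `> j`: its faces are the chains of such faces.
For `j = 0` this is the barycentric subdivision of `K`. -/
def trunc (K : SComplex V) (j : ℕ) : SComplex (Finset V) where
  faces := K.faces.powerset.filter fun C =>
    (∀ s ∈ C, j < s.card) ∧ ∀ s ∈ C, ∀ t ∈ C, s ⊆ t ∨ t ⊆ s
  down_closed := by
    intro s t hs hts
    simp only [Finset.mem_powerset, Finset.mem_filter] at hs ⊢
    exact ⟨hts.trans hs.1, fun a ha => hs.2.1 a (hts ha),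
      fun a ha b hb => hs.2.2 a (hts ha) b (hts hb)⟩

/-- `Δ_A`: the complex obtained from `K` by deleting all faces containing a member of `A`. -/
def deleteAbove (K : SComplex V) (A : Finset (Finset V)) : SComplex V where
  faces := K.faces.filter fun s => ∀ τ ∈ A, ¬ τ ⊆ s
  down_closed := by
    intro s t hs hts
    simp only [Finset.mem_filter] at hs ⊢
    exact ⟨K.down_closed hs.1 hts, fun τ hτ hsub => hs.2 τ hτ (hsub.trans hts)⟩

/-- The number of faces of `K` of cardinality `i`, i.e. the face number `f_{i-1}(K)`. -/
def faceCount (K : SComplex V) (i : ℕ) : ℕ := (K.faces.filter fun s => s.card = i).card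

/-- The Euler characteristic `χ(K) = Σ_{i ≥ 0} (-1)^i f_i(K)`. -/
def eulerChar (K : SComplex V) : ℤ :=
  ∑ s ∈ K.faces.filter (fun s => s ≠ ∅), (-1 : ℤ) ^ (s.card - 1)

/-- The reduced Euler characteristic `χ̃(K) = χ(K) - 1`. -/
def reducedEulerChar (K : SComplex V) : ℤ := eulerChar K - 1

end SComplex

/-! ### Simplicial homology with coefficients in a field `k` -/

/-- An arbitrary linear order on a finite type. -/
noncomputable def arbOrder (V : Type) [Fintype V] : LinearOrder V :=
  LinearOrder.lift' (Fintype.equivFin V) (Equiv.injective _)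

namespace SComplex

variable {V : Type} [DecidableEq V]

/-- The faces of `K` of cardinality `n`, as a type. -/
def Faces (K : SComplex V) (n : ℕ) : Type :=
  {s : Finset V // s ∈ K.faces ∧ s.card = n}

/-- The space of reduced simplicial `n`-chains of `K`: formal `k`-linear combinations of the
faces of cardinality `n` (such a face has dimension `n - 1`; the empty face sits in degree `0`,
which produces *reduced* homology). -/
abbrev ChainsOf (k : Type) [Field k] (K : SComplex V) (n : ℕ) : Type := Faces K n →₀ k

variable (k : Type) [Field k] [Fintype V]

/-- The simplicial boundary map, with signs determined by an arbitrary but fixed linear order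
on the vertices. -/
noncomputable def bd (K : SComplex V) (n : ℕ) :
    ChainsOf k K n →ₗ[k] ChainsOf k K (n - 1) :=
  letI : LinearOrder V := arbOrder V
  Finsupp.lsum k fun s : Faces K n =>
    LinearMap.toSpanSingleton k (ChainsOf k K (n - 1))
      (∑ x ∈ s.1.attach,
        ((-1 : k) ^ (s.1.filter (fun y => y < x.1)).card) •
          Finsupp.single
            (⟨s.1.erase x.1,
              K.down_closed s.2.1 (Finset.erase_subset _ _),
              by rw [Finset.card_erase_of_mem x.2, s.2.2]⟩ : Faces K (n - 1))
            (1 : k))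

/-- `HVanish k K i` says that the reduced simplicial homology `H̃_{i-1}(K; k)` vanishes.
Note the indexing convention: the index `i` is the *cardinality* of the relevant faces, so this
is reduced homology in topological degree `i - 1`; e.g. `HVanish k K 1` says `H̃₀(K; k) = 0`
(`K` is connected and nonempty) and `HVanish k K 0` says `H̃₋₁(K; k) = 0` (`K` has a face).
Since the cycles in degree `i - 1` are `ker ∂ᵢ` and the boundaries are `im ∂ᵢ₊₁`, and the
boundaries are always contained in the cycles, vanishing of homology says exactly that every
cycle is a boundary. -/
def HVanish (K : SComplex V) (i : ℕ) : Prop :=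
  LinearMap.ker (bd k K i) ≤ LinearMap.range (bd k K (i + 1))

/-- `redHomologyRank k K i` is the dimension `dim_k H̃_{i-1}(K; k)` of the reduced simplicial
homology of `K` in topological degree `i - 1` (cardinality index `i`), namely the dimension of
the cycles `ker ∂ᵢ` modulo the boundaries `im ∂ᵢ₊₁`. -/
noncomputable def redHomologyRank (K : SComplex V) (i : ℕ) : ℕ :=
  Module.finrank k ↥(LinearMap.ker (bd k K i)) -
    Module.finrank k ↥(LinearMap.range (bd k K (i + 1)) ⊓ LinearMap.ker (bd k K i))

end SComplex

/-! ### Depth, Serre conditions, and Stanley–Reisner rings -/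

/-- The length of a longest regular sequence on `R` contained in the ideal `I`
(the `I`-depth of `R`). -/
noncomputable def depthIn (R : Type) [CommRing R] (I : Ideal R) : ℕ :=
  sSup {n : ℕ | ∃ rs : List R, rs.length = n ∧ (∀ r ∈ rs, r ∈ I) ∧
    RingTheory.Sequence.IsRegular R rs}

/-- Serre's condition `(S_ℓ)` for a commutative ring:
`depth R_p ≥ min {ℓ, dim R_p}` for every prime `p`. -/
def SerreCondS (ℓ : ℕ) (R : Type) [CommRing R] : Prop :=
  ∀ (p : Ideal R) (hp : p.IsPrime),
    haveI := hp
    min ((ℓ : ℕ∞) : WithBot ℕ∞) (ringKrullDim (Localization.AtPrime p)) ≤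
      ((depthIn (Localization.AtPrime p)
        (IsLocalRing.maximalIdeal (Localization.AtPrime p)) : ℕ∞) : WithBot ℕ∞)

namespace SComplex

variable {V : Type} [DecidableEq V] (k : Type) [Field k]

/-- The Stanley–Reisner ideal of `K`: generated by the squarefree monomials supported on
non-faces. -/
noncomputable def srIdeal (K : SComplex V) : Ideal (MvPolynomial V k) :=
  Ideal.span ((fun s : Finset V => ∏ v ∈ s, MvPolynomial.X v) '' {s : Finset V | s ∉ K.faces})

/-- The Stanley–Reisner ring `k[Δ]`. -/
noncomputable abbrev SRRing (K : SComplex V) : Type := MvPolynomial V k ⧸ srIdeal k K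

/-- `depth k[Δ]`: the depth of the Stanley–Reisner ring with respect to its irrelevant
(graded maximal) ideal. -/
noncomputable def srDepth (K : SComplex V) : ℕ :=
  depthIn (SRRing k K)
    (Ideal.span (Set.range fun v : V => Ideal.Quotient.mk (srIdeal k K) (MvPolynomial.X v)))

/-- `k[Δ]` satisfies Serre's condition `(S_ℓ)`. -/
def SerreS (ℓ : ℕ) (K : SComplex V) : Prop := SerreCondS ℓ (SRRing k K)

end SComplex

/-! ### Order complexes of finite posets -/

/-- The order complex `O(P)` of a finite poset: its faces are the chains of `P`. -/
def orderComplex (P : Type) [DecidableEq P] [Fintype P] [PartialOrder P]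
    [∀ a b : P, Decidable (a ≤ b)] : SComplex P where
  faces := Finset.univ.filter fun C : Finset P => ∀ a ∈ C, ∀ b ∈ C, a ≤ b ∨ b ≤ a
  down_closed := by
    intro s t hs hts
    simp only [Finset.mem_filter, Finset.mem_univ, true_and] at hs ⊢
    exact fun a ha b hb => hs a (hts ha) b (hts hb)

/-- The height of an element of a finite poset: the maximal cardinality of a chain with top
element `p` (so minimal elements have height `1`). -/
def pheight {P : Type} [DecidableEq P] [Fintype P] [PartialOrder P]
    [∀ a b : P, Decidable (a ≤ b)] (p : P) : ℕ :=
  Finset.sup (Finset.univ.filter fun C : Finset P =>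
    p ∈ C ∧ (∀ a ∈ C, a ≤ p) ∧ ∀ a ∈ C, ∀ b ∈ C, a ≤ b ∨ b ≤ a) Finset.card

/-- The height `ht P` of a finite poset: the maximal cardinality of a chain. -/
def pheightMax (P : Type) [DecidableEq P] [Fintype P] [PartialOrder P]
    [∀ a b : P, Decidable (a ≤ b)] : ℕ :=
  Finset.univ.sup (pheight (P := P))

/-- `O(P_{>j})`: the full subcomplex of the order complex on the elements of height `> j`. -/
def ocAbove (P : Type) [DecidableEq P] [Fintype P] [PartialOrder P]
    [∀ a b : P, Decidable (a ≤ b)] (j : ℕ) : SComplex P :=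
  (orderComplex P).restrict (Finset.univ.filter fun p => j < pheight p)

/-- The face poset `F(Δ)` of a simplicial complex: the nonempty faces, ordered by inclusion. -/
abbrev SComplex.FacePoset {V : Type} [DecidableEq V] (K : SComplex V) : Type :=
  {s : Finset V // s ∈ K.faces ∧ s ≠ ∅}

instance {V : Type} [DecidableEq V] (K : SComplex V) :
    ∀ a b : K.FacePoset, Decidable (a ≤ b) := fun a b =>
  decidable_of_iff (a.1 ≤ b.1) Subtype.coe_le_coe

/-- `r` is a nonzerodivisor modulo the ideal `𝔞`. -/
def RegularMod {A : Type*} [CommRing A] (𝔞 : Ideal A) (r : A) : Prop :=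
  ∀ m, r * m ∈ 𝔞 → m ∈ 𝔞

/-- There is a weakly regular sequence of length `n` on `A ⧸ 𝔞` with members in `T`. -/
def HasRegularSeq {A : Type*} [CommRing A] (T : Set A) : ℕ → Ideal A → Prop
  | 0, _ => True
  | n + 1, 𝔞 => ∃ r ∈ T, RegularMod 𝔞 r ∧ HasRegularSeq T n (𝔞 ⊔ Ideal.span {r})

section RegularSeq

variable {A : Type*} [CommRing A]

lemma mem_sup_span_singleton_iff {𝔞 : Ideal A} {r z : A} :
    z ∈ 𝔞 ⊔ Ideal.span {r} ↔ ∃ c, z - r * c ∈ 𝔞 := by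
  constructor
  · intro h
    obtain ⟨a, ha, b, hb, rfl⟩ := Submodule.mem_sup.1 h
    obtain ⟨c, rfl⟩ := Ideal.mem_span_singleton'.1 hb
    exact ⟨c, by convert ha using 1; ring⟩
  · rintro ⟨c, hc⟩
    have h : z = (z - r * c) + r * c := by ring
    rw [h]
    exact Ideal.add_mem _ (Ideal.mem_sup_left hc)
      (Ideal.mem_sup_right (Ideal.mul_mem_right _ _ (Ideal.mem_span_singleton_self r)))

lemma RegularMod.mul {𝔞 : Ideal A} {r s : A} (hr : RegularMod 𝔞 r) (hs : RegularMod 𝔞 s) :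
    RegularMod 𝔞 (r * s) := fun m hm => hs m (hr _ (by rwa [← mul_assoc]))

/-- Permutability of regular sequences of length two. -/
lemma RegularMod.swap {𝔞 : Ideal A} {x s : A} (hx : RegularMod 𝔞 x)
    (hs : RegularMod (𝔞 ⊔ Ideal.span {x}) s) : RegularMod (𝔞 ⊔ Ideal.span {s}) x := by
  intro m hm
  obtain ⟨c, hc⟩ := mem_sup_span_singleton_iff.1 hm
  obtain ⟨d, hd⟩ := mem_sup_span_singleton_iff.1 <| hs c <|
    mem_sup_span_singleton_iff.2 ⟨m, by convert 𝔞.neg_mem hc using 1; ring⟩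
  refine mem_sup_span_singleton_iff.2 ⟨d, hx _ ?_⟩
  convert 𝔞.add_mem hc (𝔞.mul_mem_left s hd) using 1
  ring

/-- Prime avoidance for finitely many cyclic modules, along a ring homomorphism. -/
lemma exists_regularMod [IsNoetherianRing A] {B : Type*} [CommRing B] (ι : B →+* A)
    (I : Ideal B) {𝒜 : Set (Ideal A)} (hfin : 𝒜.Finite)
    (h : ∀ 𝔞 ∈ 𝒜, ∀ z, (∀ r ∈ I, ι r * z ∈ 𝔞) → z ∈ 𝔞) :
    ∃ r ∈ I, ∀ 𝔞 ∈ 𝒜, RegularMod 𝔞 (ι r) := by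
  by_contra! hcon
  have hS : (⋃ 𝔞 ∈ 𝒜, associatedPrimes A (A ⧸ 𝔞)).Finite :=
    hfin.biUnion fun 𝔞 _ => associatedPrimes.finite A (A ⧸ 𝔞)
  have hprime : ∀ P ∈ ⋃ 𝔞 ∈ 𝒜, associatedPrimes A (A ⧸ 𝔞), P.IsPrime := by
    intro P hP
    simp only [Set.mem_iUnion] at hP
    obtain ⟨𝔞, -, hP⟩ := hP
    exact hP.isPrime
  have hsub : (I : Set B) ⊆ ⋃ P ∈ ⋃ 𝔞 ∈ 𝒜, associatedPrimes A (A ⧸ 𝔞), (P.comap ι : Set B) := by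
    intro r hr
    obtain ⟨𝔞, h𝔞, hreg⟩ := hcon r hr
    have hmem : ι r ∈ ⋃ P ∈ associatedPrimes A (A ⧸ 𝔞), (P : Set A) := by
      rw [biUnion_associatedPrimes_eq_zero_divisors]
      simp only [RegularMod, not_forall] at hreg
      obtain ⟨m, hm, hm'⟩ := hreg
      refine ⟨Ideal.Quotient.mk 𝔞 m, fun h0 => hm' (Ideal.Quotient.eq_zero_iff_mem.1 h0), ?_⟩
      exact Ideal.Quotient.eq_zero_iff_mem.2 hm
    simp only [Set.mem_iUnion] at hmem ⊢
    obtain ⟨P, hP, hrP⟩ := hmem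
    exact ⟨P, ⟨𝔞, h𝔞, hP⟩, hrP⟩
  obtain ⟨P, hP, hIP⟩ := (Ideal.subset_union_prime_finite hS (f := fun P => P.comap ι) 0 0
    fun P hP _ _ => (hprime P hP).comap ι).1 hsub
  simp only [Set.mem_iUnion] at hP
  obtain ⟨𝔞, h𝔞, hP⟩ := hP
  obtain ⟨hP, x, hx⟩ := isAssociatedPrime_iff.1 hP
  obtain ⟨z, rfl⟩ := Ideal.Quotient.mk_surjective x
  have hmemP : ∀ p, p ∈ P ↔ p * z ∈ 𝔞 := fun p => by
    rw [hx, Submodule.mem_colon_singleton, Submodule.mem_bot]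
    exact Ideal.Quotient.eq_zero_iff_mem (a := p * z)
  have hz : z ∈ 𝔞 := h 𝔞 h𝔞 z fun r hr => (hmemP _).1 (hIP hr)
  exact hP.ne_top ((Ideal.eq_top_iff_one P).2 ((hmemP 1).2 (by rwa [one_mul])))

lemma HasRegularSeq.of_succ {T : Set A} {n : ℕ} {𝔞 : Ideal A}
    (h : HasRegularSeq T (n + 1) 𝔞) : HasRegularSeq T n 𝔞 := by
  induction n generalizing 𝔞 with
  | zero => trivial
  | succ n ih =>
    obtain ⟨r, hr, hreg, h⟩ := h
    exact ⟨r, hr, hreg, ih h⟩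

/-- All maximal regular sequences in an ideal have the same length: one may start a regular
sequence of optimal length with any regular element. -/
lemma HasRegularSeq.sup_span [IsNoetherianRing A] {I : Ideal A} {n : ℕ} {𝔞 : Ideal A} {r : A}
    (h : HasRegularSeq (I : Set A) (n + 1) 𝔞) (hr : r ∈ I) (hreg : RegularMod 𝔞 r) :
    HasRegularSeq (I : Set A) n (𝔞 ⊔ Ideal.span {r}) := by
  induction n generalizing 𝔞 r with
  | zero => trivial
  | succ n ih =>
    obtain ⟨x, hx, hxreg, h⟩ := h
    obtain ⟨s₀, hs₀, hs₀reg, -⟩ := id h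
    have hsocx : ∀ z, (∀ p ∈ I, p * z ∈ 𝔞 ⊔ Ideal.span {x}) → z ∈ 𝔞 ⊔ Ideal.span {x} :=
      fun z hz => hs₀reg z (hz s₀ hs₀)
    have hsocr : ∀ z, (∀ p ∈ I, p * z ∈ 𝔞 ⊔ Ideal.span {r}) → z ∈ 𝔞 ⊔ Ideal.span {r} := by
      intro u hu
      obtain ⟨v, hv⟩ := mem_sup_span_singleton_iff.1 (hu x hx)
      have hvx : v ∈ 𝔞 ⊔ Ideal.span {x} := by
        refine hsocx v fun p hp => ?_
        obtain ⟨w, hw⟩ := mem_sup_span_singleton_iff.1 (hu p hp)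
        refine mem_sup_span_singleton_iff.2 ⟨w, hreg _ ?_⟩
        convert 𝔞.sub_mem (𝔞.mul_mem_left x hw) (𝔞.mul_mem_left p hv) using 1
        ring
      obtain ⟨t, ht⟩ := mem_sup_span_singleton_iff.1 hvx
      refine mem_sup_span_singleton_iff.2 ⟨t, hxreg _ ?_⟩
      convert 𝔞.add_mem hv (𝔞.mul_mem_left r ht) using 1
      ring
    obtain ⟨s, hs, hsreg⟩ := exists_regularMod (RingHom.id A) I
      (𝒜 := {𝔞 ⊔ Ideal.span {x}, 𝔞 ⊔ Ideal.span {r}}) (by simp) (by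
        rintro 𝔟 (rfl | rfl) z hz
        · exact hsocx z hz
        · exact hsocr z hz)
    simp only [RingHom.id_apply, Set.mem_insert_iff, Set.mem_singleton_iff, forall_eq_or_imp,
      forall_eq] at hsreg
    obtain ⟨hsx, hsr⟩ := hsreg
    have hseq : HasRegularSeq (I : Set A) (n + 1) (𝔞 ⊔ Ideal.span {s}) := by
      refine ⟨x, hx, hxreg.swap hsx, ?_⟩
      rw [sup_right_comm]
      exact ih h hs hsx
    refine ⟨s, hs, hsr, ?_⟩
    rw [sup_right_comm]
    exact ih hseq hr (hreg.swap hsr)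

/-- Regular sequences in a proper ideal of a Noetherian ring have bounded length. -/
lemma exists_not_hasRegularSeq [IsNoetherianRing A] {I : Ideal A} (hI : I ≠ ⊤) (𝔞 : Ideal A)
    (h𝔞 : 𝔞 ≤ I) : ∃ n, ¬ HasRegularSeq (I : Set A) n 𝔞 := by
  induction 𝔞 using IsNoetherian.induction with
  | hgt 𝔞 ih =>
    by_cases h : ∃ r ∈ I, RegularMod 𝔞 r
    · obtain ⟨r, hr, hreg⟩ := h
      have hlt : 𝔞 < 𝔞 ⊔ Ideal.span {r} := by
        refine lt_of_le_of_ne le_sup_left fun heq => hI ((Ideal.eq_top_iff_one I).2 (h𝔞 ?_))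
        refine hreg 1 ?_
        rw [mul_one, heq]
        exact Ideal.mem_sup_right (Ideal.mem_span_singleton_self r)
      obtain ⟨n, hn⟩ := ih _ hlt
        (sup_le h𝔞 ((Ideal.span_singleton_le_iff_mem I).2 hr))
      exact ⟨n + 1, fun hcon => hn (hcon.sup_span hr hreg)⟩
    · exact ⟨1, fun ⟨r, hr, hreg, _⟩ => h ⟨r, hr, hreg⟩⟩

lemma isSMulRegular_quotient_smul_top_iff {𝔞 : Ideal A} {r : A} :
    IsSMulRegular (A ⧸ (𝔞 • ⊤ : Submodule A A)) r ↔ RegularMod 𝔞 r := by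
  have h : (𝔞 • ⊤ : Submodule A A) = 𝔞 := by simp
  rw [h, isSMulRegular_iff_right_eq_zero_of_smul]
  constructor
  · intro hr m hm
    exact Ideal.Quotient.eq_zero_iff_mem.1
      (hr (Ideal.Quotient.mk 𝔞 m) (Ideal.Quotient.eq_zero_iff_mem.2 hm))
  · intro hr x hx
    obtain ⟨m, rfl⟩ := Ideal.Quotient.mk_surjective x
    exact Ideal.Quotient.eq_zero_iff_mem.2 (hr m (Ideal.Quotient.eq_zero_iff_mem.1 hx))

lemma isWeaklyRegular_self_iff {rs : List A} :
    RingTheory.Sequence.IsWeaklyRegular A rs ↔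
      ∀ i (h : i < rs.length), RegularMod (Ideal.ofList (rs.take i)) rs[i] := by
  rw [RingTheory.Sequence.isWeaklyRegular_iff]
  simp only [isSMulRegular_quotient_smul_top_iff]

lemma hasRegularSeq_iff {T : Set A} {n : ℕ} {𝔞 : Ideal A} :
    HasRegularSeq T n 𝔞 ↔ ∃ rs : List A, rs.length = n ∧ (∀ r ∈ rs, r ∈ T) ∧
      ∀ i (h : i < rs.length), RegularMod (𝔞 ⊔ Ideal.ofList (rs.take i)) rs[i] := by
  induction n generalizing 𝔞 with
  | zero =>
    refine ⟨fun _ => ⟨[], by simp⟩, fun _ => trivial⟩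
  | succ n ih =>
    simp only [HasRegularSeq, ih]
    constructor
    · rintro ⟨r, hr, hreg, rs, rfl, hT, h⟩
      refine ⟨r :: rs, rfl, by simpa using ⟨hr, hT⟩, ?_⟩
      rintro (_ | i) hi
      · simpa using hreg
      · simpa [sup_assoc] using h i (by simpa using hi)
    · rintro ⟨_ | ⟨r, rs⟩, hlen, hT, h⟩
      · simp at hlen
      · refine ⟨r, hT r (by simp), ?_, rs, by simpa using hlen,
          fun s hs => hT s (by simp [hs]), fun i hi => ?_⟩
        · have h0 := h 0 (Nat.succ_pos _)
          change RegularMod (𝔞 ⊔ Ideal.ofList []) r at h0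
          rwa [Ideal.ofList_nil, sup_bot_eq] at h0
        have hi' := h (i + 1) (Nat.succ_lt_succ hi)
        change RegularMod (𝔞 ⊔ Ideal.ofList (r :: rs.take i)) rs[i] at hi'
        rwa [Ideal.ofList_cons, ← sup_assoc] at hi'

lemma hasRegularSeq_bot_iff {T : Set A} {n : ℕ} :
    HasRegularSeq T n ⊥ ↔ ∃ rs : List A, rs.length = n ∧ (∀ r ∈ rs, r ∈ T) ∧
      RingTheory.Sequence.IsWeaklyRegular A rs := by
  simp only [hasRegularSeq_iff, bot_sup_eq, isWeaklyRegular_self_iff]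

/-- A regular sequence coming from a retract is regular on the retract. -/
lemma HasRegularSeq.of_retract {B : Type*} [CommRing B] (ι : B →+* A) (ρ : A →+* B)
    (hρ : ∀ b, ρ (ι b) = b) {T : Set B} {n : ℕ} (h : HasRegularSeq (ι '' T) n ⊥) :
    HasRegularSeq T n ⊥ := by
  rw [hasRegularSeq_bot_iff] at h ⊢
  obtain ⟨rs, rfl, hT, h⟩ := h
  have hmap : (rs.map ρ).map ι = rs := by
    rw [List.map_map]
    conv_rhs => rw [← List.map_id rs]
    refine List.map_congr_left fun r hr => ?_
    obtain ⟨b, -, rfl⟩ := hT r hr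
    simp [hρ]
  refine ⟨rs.map ρ, by simp, fun r hr => ?_, ?_⟩
  · obtain ⟨a, ha, rfl⟩ := List.mem_map.1 hr
    obtain ⟨b, hb, rfl⟩ := hT a ha
    rwa [hρ]
  rw [← hmap, isWeaklyRegular_self_iff] at h
  rw [isWeaklyRegular_self_iff]
  generalize rs.map ρ = rs at h
  intro i hi m hm
  have hιm := h i (by simpa using hi) (ι m) (by
    rw [← List.map_take, ← Ideal.map_ofList, List.getElem_map, ← map_mul]
    exact Ideal.mem_map_of_mem ι hm)
  rw [← List.map_take, ← Ideal.map_ofList] at hιm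
  have hcomp : ρ.comp ι = RingHom.id B := RingHom.ext hρ
  have hρm := Ideal.mem_map_of_mem ρ hιm
  rwa [Ideal.map_map, hcomp, Ideal.map_id, hρ] at hρm

end RegularSeq

/-- Suppose `A` is graded (the grading being encoded by `φ : A → A[X]`), `B` maps to degree zero
and `y` has degree one. If every element of `M` has its square in `I A + y A`, then the grade
of `I` on `A` is at least the grade of `M` minus one. -/
lemma HasRegularSeq.image_of_graded {A B : Type*} [CommRing A] [IsNoetherianRing A] [CommRing B]
    (ι : B →+* A) {I : Ideal B} {M : Ideal A} (φ : A →+* Polynomial A) {y : A}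
    (hφ : ∀ f, (φ f).eval 1 = f) (hι : ∀ b, φ (ι b) = Polynomial.C (ι b))
    (hy : φ y = Polynomial.C y * Polynomial.X) (hIM : I.map ι ≤ M)
    (hM : ∀ x ∈ M, x * x ∈ I.map ι ⊔ Ideal.span {y})
    {n : ℕ} {𝔞 : Ideal A} (h𝔞 : 𝔞 ≤ (𝔞.map Polynomial.C).comap φ)
    (h : HasRegularSeq (M : Set A) (n + 1) 𝔞) : HasRegularSeq (ι '' I) n 𝔞 := by
  induction n generalizing 𝔞 with
  | zero => trivial
  | succ n ih =>
    have hI : ∀ z, (∀ b ∈ I, ι b * z ∈ 𝔞) → ∀ p ∈ I.map ι, p * z ∈ 𝔞 := by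
      intro z hz p hp
      have hle : I.map ι ≤ 𝔞.colon {z} :=
        Ideal.map_le_iff_le_comap.2 fun b hb => Submodule.mem_colon_singleton.2 (hz b hb)
      exact Submodule.mem_colon_singleton.1 (hle hp)
    have hdescend : ∀ z, (∀ b ∈ I, ι b * z ∈ 𝔞) →
        ∃ w, (∀ b ∈ I, ι b * w ∈ 𝔞) ∧ z - y * w ∈ 𝔞 := by
      intro z hz
      obtain ⟨x₀, hx₀, hx₀reg, -⟩ := id h
      have hxreg : RegularMod 𝔞 (x₀ * x₀) := hx₀reg.mul hx₀reg
      obtain ⟨s, hs, hsreg, -⟩ := h.sup_span (M.mul_mem_left x₀ hx₀) hxreg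
      obtain ⟨x', hx', c, hc⟩ : ∃ x' ∈ I.map ι, ∃ c, x₀ * x₀ = x' + y * c := by
        obtain ⟨c, hc⟩ := mem_sup_span_singleton_iff.1 (hM x₀ hx₀)
        exact ⟨_, hc, c, by ring⟩
      obtain ⟨s', hs', d, hd⟩ : ∃ s' ∈ I.map ι, ∃ d, s * s = s' + y * d := by
        obtain ⟨c, hc⟩ := mem_sup_span_singleton_iff.1 (hM s hs)
        exact ⟨_, hc, c, by ring⟩
      generalize x₀ * x₀ = x at hxreg hsreg hc
      subst hc
      have hcz : c * z ∈ 𝔞 ⊔ Ideal.span {x' + y * c} := by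
        refine (hsreg.mul hsreg) _ (mem_sup_span_singleton_iff.2 ⟨d * z, ?_⟩)
        rw [hd]
        convert 𝔞.sub_mem (𝔞.mul_mem_left c (hI z hz s' hs'))
          (𝔞.mul_mem_left d (hI z hz x' hx')) using 1
        ring
      obtain ⟨w, hw⟩ := mem_sup_span_singleton_iff.1 hcz
      refine ⟨w, fun b hb => hxreg _ ?_, hxreg _ ?_⟩
      · convert 𝔞.sub_mem (𝔞.mul_mem_left c (hz b hb)) (𝔞.mul_mem_left (ι b) hw) using 1
        ring
      · convert 𝔞.add_mem (hI z hz x' hx') (𝔞.mul_mem_left y hw) using 1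
        ring
    have hcoeff : ∀ {f}, f ∈ 𝔞 → ∀ j, (φ f).coeff j ∈ 𝔞 := fun hf =>
      Ideal.mem_map_C_iff.1 (h𝔞 hf)
    have hzero : ∀ j z, (∀ b ∈ I, ι b * z ∈ 𝔞) → (φ z).coeff j ∈ 𝔞 := by
      intro j
      induction j with
      | zero =>
        intro z hz
        obtain ⟨w, -, hw⟩ := hdescend z hz
        have := hcoeff hw 0
        rw [map_sub, map_mul, hy, mul_right_comm] at this
        simpa using this
      | succ j ihj =>
        intro z hz
        obtain ⟨w, hw', hw⟩ := hdescend z hz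
        have := hcoeff hw (j + 1)
        rw [map_sub, map_mul, hy, mul_right_comm, Polynomial.coeff_sub, Polynomial.coeff_mul_X,
          Polynomial.coeff_C_mul] at this
        exact (𝔞.sub_mem_iff_left (𝔞.mul_mem_left y (ihj w hw'))).1 this
    obtain ⟨r, hr, hreg⟩ := exists_regularMod ι I (Set.finite_singleton 𝔞) (by
      rintro _ rfl z hz
      rw [← hφ z, Polynomial.eval_eq_sum_range]
      exact Ideal.sum_mem _ fun j _ => Ideal.mul_mem_right _ _ (hzero j z hz))
    have hreg := hreg 𝔞 rfl
    refine ⟨ι r, ⟨r, hr, rfl⟩, hreg, ih ?_ (h.sup_span (hIM (Ideal.mem_map_of_mem ι hr)) hreg)⟩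
    rw [Ideal.map_sup]
    refine sup_le (h𝔞.trans (Ideal.comap_mono le_sup_left)) ?_
    rw [Ideal.span_singleton_le_iff_mem, Ideal.mem_comap, hι]
    exact Ideal.mem_sup_right (Ideal.mem_map_of_mem _ (Ideal.mem_span_singleton_self _))

lemma hasRegularSeq_depthIn {R : Type} [CommRing R] {I : Ideal R} (h : depthIn R I ≠ 0) :
    Nontrivial R ∧ HasRegularSeq (I : Set R) (depthIn R I) ⊥ := by
  obtain ⟨hne, hbdd⟩ : {n : ℕ | ∃ rs : List R, rs.length = n ∧ (∀ r ∈ rs, r ∈ I) ∧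
      RingTheory.Sequence.IsRegular R rs}.Nonempty ∧ BddAbove {n : ℕ | ∃ rs : List R,
      rs.length = n ∧ (∀ r ∈ rs, r ∈ I) ∧ RingTheory.Sequence.IsRegular R rs} := by
    refine ⟨Set.nonempty_iff_ne_empty.2 fun h0 => h ?_, by_contra fun h0 => h ?_⟩
    · rw [depthIn, h0, csSup_empty, bot_eq_zero]
    · exact Nat.sSup_of_not_bddAbove h0
  obtain ⟨rs, hlen, hI, hreg⟩ := Nat.sSup_mem hne hbdd
  refine ⟨?_, hasRegularSeq_bot_iff.2 ⟨rs, hlen, hI, hreg.toIsWeaklyRegular⟩⟩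
  by_contra hR
  rw [not_nontrivial_iff_subsingleton] at hR
  exact hreg.top_ne_smul (Subsingleton.elim _ _)

lemma le_depthIn {R : Type} [CommRing R] [IsNoetherianRing R] {I : Ideal R} (hI : I ≠ ⊤) {n : ℕ}
    (h : HasRegularSeq (I : Set R) n ⊥) : n ≤ depthIn R I := by
  obtain ⟨N, hN⟩ := exists_not_hasRegularSeq hI ⊥ bot_le
  refine le_csSup ⟨N, ?_⟩ ?_
  · rintro m ⟨rs, rfl, hrs, hreg⟩
    have hseq : HasRegularSeq (I : Set R) rs.length ⊥ :=
      hasRegularSeq_bot_iff.2 ⟨rs, rfl, hrs, hreg.toIsWeaklyRegular⟩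
    by_contra! hlt
    exact hN (Nat.le_induction (P := fun m _ => HasRegularSeq (I : Set R) m ⊥ →
      HasRegularSeq (I : Set R) N ⊥) id (fun _ _ ih hm => ih hm.of_succ) _ hlt.le hseq)
  · obtain ⟨rs, hlen, hrs, hreg⟩ := hasRegularSeq_bot_iff.1 h
    refine ⟨rs, hlen, hrs, hreg, fun htop => hI (top_unique ?_)⟩
    rw [htop, smul_eq_mul, Ideal.mul_top]
    exact Ideal.span_le.2 hrs

namespace SComplex

variable {V : Type} [DecidableEq V] (k : Type) [Field k] (K : SComplex V)

/-- The class of the variable `v` in the Stanley–Reisner ring. -/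
noncomputable def srVar (v : V) : SRRing k K := Ideal.Quotient.mk (srIdeal k K) (MvPolynomial.X v)

/-- The irrelevant ideal of the Stanley–Reisner ring. -/
noncomputable def srIrrelevant : Ideal (SRRing k K) := Ideal.span (Set.range (srVar k K))

variable {K}

lemma prod_srVar_eq_zero {s : Finset V} (hs : s ∉ K.faces) : ∏ v ∈ s, srVar k K v = 0 := by
  simp only [srVar, ← map_prod]
  exact Ideal.Quotient.eq_zero_iff_mem.2 (Ideal.subset_span ⟨s, hs, rfl⟩)

variable {k}

/-- The universal property of the Stanley–Reisner ring. -/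
noncomputable def srLift {S : Type} [CommRing S] [Algebra k S] (f : V → S)
    (h : ∀ s : Finset V, s ∉ K.faces → ∏ v ∈ s, f v = 0) : SRRing k K →ₐ[k] S :=
  Ideal.Quotient.liftₐ (srIdeal k K) (MvPolynomial.aeval f) fun a ha => by
    have hle : srIdeal k K ≤ RingHom.ker (MvPolynomial.aeval f : MvPolynomial V k →ₐ[k] S) := by
      refine Ideal.span_le.2 ?_
      rintro _ ⟨s, hs, rfl⟩
      simpa [RingHom.mem_ker, map_prod] using h s hs
    exact hle ha

@[simp]
lemma srLift_srVar {S : Type} [CommRing S] [Algebra k S] (f : V → S)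
    (h : ∀ s : Finset V, s ∉ K.faces → ∏ v ∈ s, f v = 0) (v : V) :
    srLift (k := k) f h (srVar k K v) = f v := by
  change MvPolynomial.aeval f (MvPolynomial.X v) = f v
  simp

lemma srRing_algHom_ext {S : Type} [CommRing S] [Algebra k S] {f g : SRRing k K →ₐ[k] S}
    (h : ∀ v, f (srVar k K v) = g (srVar k K v)) : f = g :=
  Ideal.Quotient.algHom_ext _ (MvPolynomial.algHom_ext h)

instance isNoetherianRing_srRing : IsNoetherianRing (SRRing k K) := by
  have hfin : (Set.range (srVar k K)).Finite := by
    refine ((Set.finite_singleton 0).union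
      ((K.faces.sup id).finite_toSet.image (srVar k K))).subset ?_
    rintro _ ⟨v, rfl⟩
    by_cases hv : {v} ∈ K.faces
    · exact Or.inr ⟨v, Finset.mem_sup.2 ⟨{v}, hv, by simp⟩, rfl⟩
    · exact Or.inl (by simpa using prod_srVar_eq_zero k hv)
  have htop : Algebra.adjoin k (Set.range (srVar k K)) = ⊤ := by
    have hrange : Set.range (srVar k K) =
        Ideal.Quotient.mkₐ k (srIdeal k K) '' Set.range MvPolynomial.X := by
      rw [← Set.range_comp]
      rfl
    rw [hrange, ← AlgHom.map_adjoin, MvPolynomial.adjoin_range_X, Algebra.map_top,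
      AlgHom.range_eq_top]
    exact Ideal.Quotient.mkₐ_surjective k _
  have : Algebra.FiniteType k (SRRing k K) := ⟨htop ▸ Subalgebra.fg_def.2 ⟨_, hfin, rfl⟩⟩
  exact Algebra.FiniteType.isNoetherianRing k _

lemma srVar_mem_srIrrelevant (v : V) : srVar k K v ∈ srIrrelevant k K :=
  Ideal.subset_span ⟨v, rfl⟩

lemma srIrrelevant_ne_top (h : ∅ ∈ K.faces) : srIrrelevant k K ≠ ⊤ := by
  let ε : SRRing k K →ₐ[k] k := srLift (fun _ => 0) fun s hs => by
    obtain ⟨v, hv⟩ : s.Nonempty := Finset.nonempty_iff_ne_empty.2 fun h0 => hs (h0 ▸ h)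
    exact Finset.prod_eq_zero hv rfl
  have hle : srIrrelevant k K ≤ RingHom.ker ε := by
    refine Ideal.span_le.2 ?_
    rintro _ ⟨v, rfl⟩
    exact srLift_srVar _ _ v
  exact fun htop => RingHom.ker_ne_top ε (top_unique (htop ▸ hle))

lemma empty_mem_faces_of_nontrivial [Nontrivial (SRRing k K)] : ∅ ∈ K.faces := by
  by_contra h
  simpa using prod_srVar_eq_zero k h

lemma mem_antistar_faces {J s : Finset V} :
    s ∈ (K.antistar J).faces ↔ s ∈ K.faces ∧ Disjoint J s := Finset.mem_filter

lemma exists_mem_of_notMem_antistar {J s : Finset V} (hs : s ∉ (K.antistar J).faces)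
    (hs' : s ∈ K.faces) : ∃ v ∈ s, v ∈ J := by
  by_contra! h
  exact hs (mem_antistar_faces.2 ⟨hs', Finset.disjoint_right.2 h⟩)

variable (k K)

/-- The inclusion of the Stanley–Reisner ring of an anti-star. -/
noncomputable def antistarInclusion (J : Finset V) : SRRing k (K.antistar J) →ₐ[k] SRRing k K :=
  srLift (fun v => if v ∈ J then 0 else srVar k K v) fun s hs => by
    by_cases hs' : s ∈ K.faces
    · obtain ⟨v, hv, hvJ⟩ := exists_mem_of_notMem_antistar hs hs'
      exact Finset.prod_eq_zero hv (if_pos hvJ)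
    · by_cases hJ : ∃ v ∈ s, v ∈ J
      · obtain ⟨v, hv, hvJ⟩ := hJ
        exact Finset.prod_eq_zero hv (if_pos hvJ)
      · push Not at hJ
        rw [Finset.prod_congr rfl fun v hv => if_neg (hJ v hv), prod_srVar_eq_zero k hs']

/-- The restriction to the Stanley–Reisner ring of an anti-star. -/
noncomputable def antistarRestriction (J : Finset V) : SRRing k K →ₐ[k] SRRing k (K.antistar J) :=
  srLift (srVar k (K.antistar J)) fun _ hs =>
    prod_srVar_eq_zero k fun h => hs (mem_antistar_faces.1 h).1

/-- The grading of the Stanley–Reisner ring by the degree in the variables from `J`. -/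
noncomputable def gradingHom (J : Finset V) : SRRing k K →ₐ[k] Polynomial (SRRing k K) :=
  srLift (fun v => Polynomial.C (srVar k K v) * (if v ∈ J then Polynomial.X else 1))
    fun s hs => by
      rw [Finset.prod_mul_distrib, ← map_prod, prod_srVar_eq_zero k hs, map_zero, zero_mul]

variable {k K}

lemma srVar_eq_zero_of_mem {J : Finset V} {v : V} (hv : v ∈ J) :
    srVar k (K.antistar J) v = 0 := by
  have h : {v} ∉ (K.antistar J).faces := fun h =>
    Finset.disjoint_left.1 (mem_antistar_faces.1 h).2 hv (Finset.mem_singleton_self v)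
  simpa using prod_srVar_eq_zero k h

lemma antistarRestriction_inclusion (J : Finset V) (b : SRRing k (K.antistar J)) :
    antistarRestriction k K J (antistarInclusion k K J b) = b := by
  have h : (antistarRestriction k K J).comp (antistarInclusion k K J) = AlgHom.id k _ := by
    refine srRing_algHom_ext fun v => ?_
    by_cases hv : v ∈ J
    · simp [antistarInclusion, srVar_eq_zero_of_mem hv]
    · simp [antistarInclusion, antistarRestriction, hv]
  exact DFunLike.congr_fun h b

lemma eval_gradingHom (J : Finset V) (f : SRRing k K) : (gradingHom k K J f).eval 1 = f := by
  have h : ((Polynomial.aeval (R := SRRing k K) (1 : SRRing k K)).restrictScalars k).comp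
      (gradingHom k K J) = AlgHom.id k _ := by
    refine srRing_algHom_ext fun v => ?_
    by_cases hv : v ∈ J <;> simp [gradingHom, hv]
  simpa [Polynomial.aeval_def, Polynomial.eval₂_id] using DFunLike.congr_fun h f

lemma gradingHom_inclusion (J : Finset V) (b : SRRing k (K.antistar J)) :
    gradingHom k K J (antistarInclusion k K J b) =
      Polynomial.C (antistarInclusion k K J b) := by
  have h : (gradingHom k K J).comp (antistarInclusion k K J) =
      (IsScalarTower.toAlgHom k (SRRing k K) (Polynomial (SRRing k K))).comp
        (antistarInclusion k K J) := by
    refine srRing_algHom_ext (S := Polynomial (SRRing k K)) fun v => ?_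
    by_cases hv : v ∈ J <;> simp [gradingHom, antistarInclusion, hv]
  exact DFunLike.congr_fun h b

lemma gradingHom_sum (J : Finset V) : gradingHom k K J (∑ a ∈ J, srVar k K a) =
    Polynomial.C (∑ a ∈ J, srVar k K a) * Polynomial.X := by
  rw [map_sum, map_sum, Finset.sum_mul]
  exact Finset.sum_congr rfl fun v hv => by simp [gradingHom, hv]

lemma map_antistarInclusion_le (J : Finset V) :
    (srIrrelevant k (K.antistar J)).map (antistarInclusion k K J : SRRing k (K.antistar J) →+* SRRing k K) ≤
      srIrrelevant k K := by
  rw [srIrrelevant, Ideal.map_span, Ideal.span_le]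
  rintro _ ⟨_, ⟨v, rfl⟩, rfl⟩
  by_cases hv : v ∈ J
  · simp [antistarInclusion, hv]
  · simpa [antistarInclusion, hv] using srVar_mem_srIrrelevant v

lemma srVar_mem_map_antistarInclusion {J : Finset V} {v : V} (hv : v ∉ J) : srVar k K v ∈
    (srIrrelevant k (K.antistar J)).map (antistarInclusion k K J : SRRing k (K.antistar J) →+* SRRing k K) := by
  have h := Ideal.mem_map_of_mem (antistarInclusion k K J : SRRing k (K.antistar J) →+* SRRing k K)
    (srVar_mem_srIrrelevant v)
  simpa [antistarInclusion, hv] using h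

/-- The sum of the variables in an independent set generates, together with the remaining
variables, an ideal containing the square of the irrelevant ideal. -/
lemma srIrrelevant_mul_self_le {J : Finset V}
    (hindep : ∀ a ∈ J, ∀ b ∈ J, a ≠ b → ({a, b} : Finset V) ∉ K.faces) :
    srIrrelevant k K * srIrrelevant k K ≤
      (srIrrelevant k (K.antistar J)).map (antistarInclusion k K J : SRRing k (K.antistar J) →+* SRRing k K) ⊔
        Ideal.span {∑ a ∈ J, srVar k K a} := by
  rw [srIrrelevant, Ideal.span_mul_span', Ideal.span_le]
  rintro _ ⟨_, ⟨v, rfl⟩, _, ⟨w, rfl⟩, rfl⟩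
  have hprod : ∀ a ∈ J, ∀ b ∈ J, a ≠ b → srVar k K a * srVar k K b = 0 := fun a ha b hb hab => by
    simpa [Finset.prod_pair hab] using prod_srVar_eq_zero k (hindep a ha b hb hab)
  by_cases hv : v ∈ J
  · by_cases hw : w ∈ J
    · obtain rfl | hvw := eq_or_ne v w
      · have hsum : (∑ a ∈ J, srVar k K a) * srVar k K v = srVar k K v * srVar k K v := by
          rw [Finset.sum_mul]
          exact Finset.sum_eq_single_of_mem v hv fun a ha hav => hprod a ha v hv hav
        refine Ideal.mem_sup_right ?_
        simp only [← hsum]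
        exact Ideal.mul_mem_right _ _ (Ideal.mem_span_singleton_self _)
      · simp [hprod v hv w hw hvw]
    · exact Ideal.mem_sup_left (Ideal.mul_mem_left _ _ (srVar_mem_map_antistarInclusion hw))
  · exact Ideal.mem_sup_left (Ideal.mul_mem_right _ _ (srVar_mem_map_antistarInclusion hv))

end SComplex

/-- If `J ⊆ V(Δ)` is an independent set of vertices for `Δ`, then
`depth k[ast_Δ(J)] ≥ depth k[Δ] - 1`. -/
theorem antistar_depth {V : Type} [DecidableEq V] (k : Type) [Field k] (K : SComplex V)
    (J : Finset V)
    (hJV : ∀ a ∈ J, ({a} : Finset V) ∈ K.faces)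
    (hindep : ∀ a ∈ J, ∀ b ∈ J, a ≠ b → ({a, b} : Finset V) ∉ K.faces) :
    SComplex.srDepth k K - 1 ≤ SComplex.srDepth k (K.antistar J) := by
  obtain h0 | ⟨n, hn⟩ : SComplex.srDepth k K = 0 ∨ ∃ n, SComplex.srDepth k K = n + 1 := by
    cases SComplex.srDepth k K <;> simp
  · simp [h0]
  have hdepth : depthIn (SComplex.SRRing k K) (SComplex.srIrrelevant k K) = n + 1 := hn
  obtain ⟨hnt, hseq⟩ := hasRegularSeq_depthIn (R := SComplex.SRRing k K)
    (I := SComplex.srIrrelevant k K) (hdepth.trans_ne n.succ_ne_zero)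
  rw [hdepth] at hseq
  have hι := SComplex.gradingHom_inclusion (k := k) (K := K) J
  have hsq : ∀ x ∈ SComplex.srIrrelevant k K, x * x ∈ _ := fun x hx =>
    SComplex.srIrrelevant_mul_self_le hindep (Ideal.mul_mem_mul hx hx)
  have himage := HasRegularSeq.image_of_graded
    (SComplex.antistarInclusion k K J : SComplex.SRRing k (K.antistar J) →+* SComplex.SRRing k K)
    (SComplex.gradingHom k K J : SComplex.SRRing k K →+* Polynomial (SComplex.SRRing k K))
    (SComplex.eval_gradingHom J) hι (SComplex.gradingHom_sum J)
    (SComplex.map_antistarInclusion_le J) hsq bot_le hseq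
  have hempty : ∅ ∈ (K.antistar J).faces := SComplex.mem_antistar_faces.2
    ⟨SComplex.empty_mem_faces_of_nontrivial (k := k), Finset.disjoint_empty_right J⟩
  rw [hn, Nat.add_sub_cancel]
  exact le_depthIn (SComplex.srIrrelevant_ne_top hempty) <|
    HasRegularSeq.of_retract
      (SComplex.antistarInclusion k K J : SComplex.SRRing k (K.antistar J) →+* SComplex.SRRing k K)
      (SComplex.antistarRestriction k K J :
        SComplex.SRRing k K →+* SComplex.SRRing k (K.antistar J))
      (SComplex.antistarRestriction_inclusion J) himage
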